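/- Let d ≥ 2 and let F be a smooth function on the standard unit sphere 𝕊^{d−1} ⊂ ℝ^d whose zeroth and first spherical harmonic components vanish (i.e. ∫_{𝕊^{d−1}} F = 0 and ∫_{𝕊^{d−1}} F(θ) θ dθ = 0). Then 0 ≤ ‖[Δ + (d−1)]F‖² − (3d+5)⟨F, [−Δ − (d−1)]F⟩ + 2(d+1)(d+2)‖F‖², where Δ is the spherical Laplacian, ⟨·,·⟩ is the L² inner product on 𝕊^{d−1} and ‖·‖ the associated L² norm. -/

import Mathlib

open MeasureTheory Real
open scoped RealInnerProductSpace Pointwise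

noncomputable section

/-- The surface (area) measure on the unit sphere `𝕊^{d-1} ⊂ ℝ^d`. -/
def sphMeasure (d : ℕ) : Measure (Metric.sphere (0 : EuclideanSpace ℝ (Fin d)) 1) :=
  (volume : Measure (EuclideanSpace ℝ (Fin d))).toSphere

/-- The degree-zero homogeneous extension of a function on the unit sphere to `ℝ^d`
(extended by `0` at the origin). -/
def ext0 {d : ℕ} (F : Metric.sphere (0 : EuclideanSpace ℝ (Fin d)) 1 → ℝ)
    (x : EuclideanSpace ℝ (Fin d)) : ℝ :=
  letI := Classical.dec (x = 0)
  if hx : x = 0 then 0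
  else F ⟨‖x‖⁻¹ • x, by
    simp [mem_sphere_zero_iff_norm, norm_smul, abs_of_nonneg, inv_mul_cancel₀,
      norm_ne_zero_iff.mpr hx]⟩

/-- The Euclidean Laplacian of `f : ℝ^d → ℝ`. -/
def eucLap {d : ℕ} (f : EuclideanSpace ℝ (Fin d) → ℝ) (x : EuclideanSpace ℝ (Fin d)) : ℝ :=
  ∑ i, fderiv ℝ (fun y => fderiv ℝ f y (EuclideanSpace.single i 1)) x (EuclideanSpace.single i 1)

/-- The Laplace–Beltrami operator (spherical Laplacian) on the unit sphere `𝕊^{d-1}`: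
for `F : 𝕊^{d-1} → ℝ`, `sphLap F` is the restriction to the sphere of the Euclidean
Laplacian of the degree-zero homogeneous extension of `F`.  (This is the standard
characterization of the spherical Laplacian.) -/
def sphLap {d : ℕ} (F : Metric.sphere (0 : EuclideanSpace ℝ (Fin d)) 1 → ℝ) :
    Metric.sphere (0 : EuclideanSpace ℝ (Fin d)) 1 → ℝ :=
  fun θ => eucLap (ext0 F) θ.val

/-- A function on the unit sphere is smooth iff its degree-zero homogeneous extension is
smooth away from the origin. -/
def SphSmooth {d : ℕ} (F : Metric.sphere (0 : EuclideanSpace ℝ (Fin d)) 1 → ℝ) : Prop :=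
  ContDiffOn ℝ (⊤ : ℕ∞) (ext0 F) {(0 : EuclideanSpace ℝ (Fin d))}ᶜ

theorem abstract_spectral {A H : Type*} [AddCommGroup A] [Module ℝ A] [NormedAddCommGroup H]
    [InnerProductSpace ℝ H] (ι : A →ₗ[ℝ] H) (L : A →ₗ[ℝ] A)
    (hsym : ∀ a b, ⟪ι (L a), ι b⟫ = ⟪ι a, ι (L b)⟫)
    (V : ℕ → Submodule ℝ A) (hV : Monotone V) [∀ n, FiniteDimensional ℝ (V n)]
    (lam : ℕ → ℝ) (h0 : ∀ a ∈ V 0, L a + lam 0 • a = 0)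
    (hs : ∀ n, ∀ a ∈ V (n+1), L a + lam (n+1) • a ∈ V n)
    (hdense : ⊤ ≤ (⨆ n, (V n).map ι).topologicalClosure)
    (b c : ℝ) (hlam : ∀ n, 0 ≤ (lam n - b) * (lam n - c)) (f : A) :
    0 ≤ ⟪ι (L f) + b • ι f, ι (L f) + c • ι f⟫ := by
  have hLV : ∀ n, ∀ a ∈ V n, L a ∈ V n := by
    intro n a ha
    cases n with
    | zero =>
      rw [eq_neg_of_add_eq_zero_left (h0 a ha)]
      exact (V 0).neg_mem ((V 0).smul_mem _ ha)
    | succ n =>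
      have := (V (n+1)).sub_mem (hV (Nat.le_succ n) (hs n a ha)) ((V (n+1)).smul_mem (lam (n+1)) ha)
      simpa using this
  have hproj : ∀ n (a : A), ∃ p ∈ V n, ι p = ((V n).map ι).starProjection (ι a) ∧
      ∀ v ∈ V n, ⟪ι (a - p), ι v⟫ = 0 := by
    intro n a
    obtain ⟨p, hp, hpe⟩ := (Submodule.mem_map).1 (((V n).map ι).starProjection_apply_mem (ι a))
    refine ⟨p, hp, hpe, fun v hv => ?_⟩
    rw [map_sub, hpe]
    exact Submodule.starProjection_inner_eq_zero _ _ (Submodule.mem_map_of_mem hv)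
  -- eigenvector on complement
  have hfin : ∀ n, ∀ p ∈ V n, 0 ≤ ⟪ι (L p) + b • ι p, ι (L p) + c • ι p⟫ := by
    have key : ∀ (l : ℝ) (w : A), 0 ≤ (l - b) * (l - c) → ι (L w) = - l • ι w →
        0 ≤ ⟪ι (L w) + b • ι w, ι (L w) + c • ι w⟫ := by
      intro l w hl hw
      rw [hw, ← add_smul, ← add_smul, inner_smul_left, inner_smul_right]
      have := mul_nonneg hl (real_inner_self_nonneg (x := ι w))
      simp only [conj_trivial]
      nlinarith
    intro n
    induction n with
    | zero =>
      intro p hp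
      apply key (lam 0) p (hlam 0)
      rw [eq_neg_of_add_eq_zero_left (h0 p hp)]; simp
    | succ n ih =>
      intro p hp
      obtain ⟨q, hq, -, hort⟩ := hproj n p
      have hq' := hV (Nat.le_succ n) hq
      set w := p - q with hw
      have hwV : w ∈ V (n+1) := (V (n+1)).sub_mem hp hq'
      have hr := hs n w hwV
      have hLr := hLV n _ hr
      have hr0 : ι (L w + lam (n+1) • w) = 0 := by
        rw [← inner_self_eq_zero (𝕜 := ℝ)]
        conv_lhs => enter [2]; rw [map_add, map_smul]
        rw [inner_add_left, inner_smul_left, hort _ hr, hsym, hort _ hLr]; simp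
      have hw2 : ι (L w) = - lam (n+1) • ι w := by
        rw [map_add, map_smul] at hr0
        rw [eq_neg_of_add_eq_zero_left hr0]; simp
      have hpq : p = q + w := by simp [hw]
      have h1 := ih q hq
      have h2 := key _ w (hlam (n+1)) hw2
      have e1 : ⟪ι w, ι q⟫ = 0 := hort _ hq
      have e2 : ⟪ι w, ι (L q)⟫ = 0 := hort _ (hLV n q hq)
      have e3 : ⟪ι (L w), ι q⟫ = 0 := by rw [hsym, e2]
      have e4 : ⟪ι (L w), ι (L q)⟫ = 0 := by rw [hsym, hort _ (hLV n _ (hLV n q hq))]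
      have e1' := e1; have e2' := e2; have e3' := e3; have e4' := e4
      rw [real_inner_comm] at e1' e2' e3' e4'
      rw [hpq]
      simp only [map_add, inner_add_left, inner_add_right, inner_smul_left, inner_smul_right,
        smul_add, conj_trivial] at h1 h2 ⊢
      rw [e1, e2, e3, e4, e1', e2', e3', e4']
      linarith
  have hmon : Monotone fun n => (V n).map ι := fun m n h => Submodule.map_mono (hV h)
  have t1 := Submodule.starProjection_tendsto_self (fun n => (V n).map ι) hmon (ι f) hdense
  have t2 := Submodule.starProjection_tendsto_self (fun n => (V n).map ι) hmon (ι (L f)) hdense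
  have t3 := (t2.add (t1.const_smul b)).inner (t2.add (t1.const_smul c)) (𝕜 := ℝ)
  refine ge_of_tendsto' t3 fun n => ?_
  obtain ⟨p, hp, hpe, hort⟩ := hproj n f
  have : ι (L p) = ((V n).map ι).starProjection (ι (L f)) := by
    refine Submodule.eq_starProjection_of_mem_of_inner_eq_zero
      (Submodule.mem_map_of_mem (hLV n p hp)) ?_ |>.symm
    intro w hw
    obtain ⟨v, hv, rfl⟩ := (Submodule.mem_map).1 hw
    rw [← map_sub, ← map_sub, hsym, hort _ (hLV n v hv)]
  have := hfin n p hp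
  simp_all

abbrev Eu (d : ℕ) := EuclideanSpace ℝ (Fin d)
abbrev Sp (d : ℕ) := Metric.sphere (0 : EuclideanSpace ℝ (Fin d)) 1

variable {d : ℕ}

lemma ext0_of_eq (F : Sp d → ℝ) (x : Eu d) (hx : x ≠ 0) (θ : Sp d) (h : θ.1 = ‖x‖⁻¹ • x) :
    ext0 F x = F θ := by
  unfold ext0
  rw [dif_neg hx]
  congr 1
  exact Subtype.ext h.symm

lemma nrm_mem (x : Eu d) (hx : x ≠ 0) : ‖x‖⁻¹ • x ∈ Sp d := by
  simp [norm_smul, inv_mul_cancel₀, norm_ne_zero_iff.mpr hx]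

lemma sp_norm (θ : Sp d) : ‖(θ : Eu d)‖ = 1 := by simp

lemma sp_ne (θ : Sp d) : (θ : Eu d) ≠ 0 := by
  intro h
  have := sp_norm θ
  rw [h] at this; simp at this

lemma ext0_sphere (F : Sp d → ℝ) (θ : Sp d) : ext0 F θ = F θ :=
  ext0_of_eq F _ (sp_ne θ) θ (by simp)

lemma ext0_smul (F : Sp d → ℝ) (x : Eu d) {t : ℝ} (ht : 0 < t) : ext0 F (t • x) = ext0 F x := by
  by_cases hx : x = 0
  · simp [hx]
  rw [ext0_of_eq F x hx ⟨_, nrm_mem x hx⟩ rfl,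
    ext0_of_eq F (t • x) (smul_ne_zero ht.ne' hx) ⟨_, nrm_mem x hx⟩]
  simp only [norm_smul, smul_smul, Real.norm_eq_abs, abs_of_pos ht]
  congr 1
  field_simp

lemma smooth_iff (F : Sp d → ℝ) :
    SphSmooth F ↔ ∀ x : Eu d, x ≠ 0 → ContDiffAt ℝ (⊤ : ℕ∞) (ext0 F) x := by
  unfold SphSmooth
  rw [ContDiffOn]
  refine forall₂_congr fun x hx => ?_
  rw [contDiffWithinAt_iff_contDiffAt]
  exact isOpen_compl_singleton.mem_nhds hx

lemma ext0_eventually (F : Sp d → ℝ) (g : Eu d → ℝ)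
    (h : ∀ x : Eu d, x ≠ 0 → ext0 F x = g x) (x : Eu d) (hx : x ≠ 0) :
    ext0 F =ᶠ[nhds x] g := by
  filter_upwards [isOpen_compl_singleton.mem_nhds hx] with y hy using h y hy

lemma contDiffAt_nrm (x : Eu d) (hx : x ≠ 0) :
    ContDiffAt ℝ (⊤ : ℕ∞) (fun y : Eu d => ‖y‖⁻¹ • y) x :=
  ((contDiffAt_norm ℝ hx).inv (norm_ne_zero_iff.2 hx)).smul contDiffAt_id

lemma smooth_of (F : Sp d → ℝ) (g : Eu d → ℝ)
    (hg : ∀ x : Eu d, x ≠ 0 → ContDiffAt ℝ (⊤ : ℕ∞) g x) (h : ∀ θ : Sp d, F θ = g θ) :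
    SphSmooth F := by
  rw [smooth_iff]
  intro x hx
  have : ext0 F =ᶠ[nhds x] fun y => g (‖y‖⁻¹ • y) := by
    refine ext0_eventually _ _ (fun y hy => ?_) x hx
    rw [ext0_of_eq F y hy ⟨_, nrm_mem y hy⟩ rfl, h]
  refine ContDiffAt.congr_of_eventuallyEq ?_ this
  exact ContDiffAt.comp x (hg _ (by simpa using hx)) (contDiffAt_nrm x hx)

lemma ext0_add (F G : Sp d → ℝ) : ext0 (F + G) = ext0 F + ext0 G := by
  funext x
  by_cases hx : x = 0
  · simp [ext0, hx]
  · simp [ext0, hx]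

lemma ext0_mul (F G : Sp d → ℝ) : ext0 (F * G) = ext0 F * ext0 G := by
  funext x
  by_cases hx : x = 0
  · simp [ext0, hx]
  · simp [ext0, hx]

lemma ext0_csmul (c : ℝ) (F : Sp d → ℝ) : ext0 (c • F) = c • ext0 F := by
  funext x
  by_cases hx : x = 0
  · simp [ext0, hx]
  · simp [ext0, hx]

/-- The algebra of smooth functions on the sphere. -/
def smA (d : ℕ) : Subalgebra ℝ (Sp d → ℝ) where
  carrier := {F | SphSmooth F}
  mul_mem' := by
    intro a b ha hb
    simp only [Set.mem_ofPred_eq, smooth_iff, ext0_mul] at *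
    exact fun x hx => (ha x hx).mul (hb x hx)
  add_mem' := by
    intro a b ha hb
    simp only [Set.mem_ofPred_eq, smooth_iff, ext0_add] at *
    exact fun x hx => (ha x hx).add (hb x hx)
  algebraMap_mem' := by
    intro r
    exact smooth_of _ (fun _ => r) (fun x hx => contDiffAt_const) (fun θ => rfl)

lemma smA_cd (F : smA d) (x : Eu d) (hx : x ≠ 0) : ContDiffAt ℝ (⊤ : ℕ∞) (ext0 F.1) x :=
  (smooth_iff _).1 F.2 x hx

lemma smA_diff (F : smA d) (x : Eu d) (hx : x ≠ 0) : DifferentiableAt ℝ (ext0 F.1) x :=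
  (smA_cd F x hx).differentiableAt (by simp)

lemma smA_fd (F : smA d) (x : Eu d) (hx : x ≠ 0) (v : Eu d) :
    ContDiffAt ℝ (⊤ : ℕ∞) (fun y => fderiv ℝ (ext0 F.1) y v) x := by
  have : ContDiffAt ℝ (⊤ : ℕ∞) (fderiv ℝ (ext0 F.1)) x :=
    (smA_cd F x hx).fderiv_right (by simp)
  exact this.clm_apply contDiffAt_const

/-- Standard basis vector. -/
abbrev ee (i : Fin d) : Eu d := EuclideanSpace.single i (1 : ℝ)

/-- Tangential partial derivative. -/
def dD (i : Fin d) : smA d →ₗ[ℝ] smA d where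
  toFun F := ⟨fun θ => fderiv ℝ (ext0 F.1) θ (ee i),
    smooth_of _ _ (fun x hx => smA_fd F x hx (ee i)) (fun θ => rfl)⟩
  map_add' F G := by
    apply Subtype.ext
    funext θ
    simp only [Subalgebra.coe_add, ext0_add, Pi.add_apply]
    rw [fderiv_add (smA_diff F _ (sp_ne θ)) (smA_diff G _ (sp_ne θ))]
    rfl
  map_smul' c F := by
    apply Subtype.ext
    funext θ
    simp only [Subalgebra.coe_smul, ext0_csmul, Pi.smul_apply]
    rw [fderiv_const_smul (smA_diff F _ (sp_ne θ))]
    rfl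

lemma dD_apply (i : Fin d) (F : smA d) (θ : Sp d) :
    (dD i F).1 θ = fderiv ℝ (ext0 F.1) θ (ee i) := rfl

lemma dD_mul (i : Fin d) (F G : smA d) : dD i (F * G) = F * dD i G + dD i F * G := by
  apply Subtype.ext
  funext θ
  simp only [Subalgebra.coe_add, Subalgebra.coe_mul, Pi.add_apply, Pi.mul_apply, dD_apply]
  rw [ext0_mul, fderiv_mul (smA_diff F _ (sp_ne θ)) (smA_diff G _ (sp_ne θ))]
  simp [ext0_sphere]
  ring

/-- coordinate functions -/
def uu (i : Fin d) : smA d := ⟨fun θ => θ.1 i, smooth_of _ (fun x => x i)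
  (fun x _ => ((EuclideanSpace.proj i : Eu d →L[ℝ] ℝ).contDiff).contDiffAt) (fun _ => rfl)⟩

lemma uu_apply (i : Fin d) (θ : Sp d) : (uu i).1 θ = θ.1 i := rfl

lemma ext0_uu (i : Fin d) (x : Eu d) (hx : x ≠ 0) : ext0 (uu i).1 x = ‖x‖⁻¹ * x i := by
  rw [ext0_of_eq _ x hx ⟨_, nrm_mem x hx⟩ rfl]; rfl

lemma hasFDerivAt_nrm (θ : Sp d) : HasFDerivAt (fun x : Eu d => ‖x‖) (innerSL ℝ θ.1) θ.1 := by
  have h := ((hasStrictFDerivAt_norm_sq θ.1).hasFDerivAt).sqrt (by simp)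
  simp only [Real.sqrt_sq (norm_nonneg _)] at h
  convert! h using 1
  ext v; simp

lemma fderiv_nrm_ee (θ : Sp d) (i : Fin d) : innerSL ℝ θ.1 (ee i) = θ.1 i := by
  simp [ee, EuclideanSpace.inner_single_right]

lemma dD_uu (i j : Fin d) : dD i (uu j) = (if i = j then 1 else 0) - uu i * uu j := by
  apply Subtype.ext
  funext θ
  have h1 : (fun x : Eu d => ‖x‖ * ext0 (uu j).1 x) =ᶠ[nhds θ.1] fun x => x j := by
    filter_upwards [isOpen_compl_singleton.mem_nhds (sp_ne θ)] with y hy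
    rw [ext0_uu j y hy]
    field_simp [norm_ne_zero_iff.2 hy]
  have h2 := (hasFDerivAt_nrm θ).mul (smA_diff (uu j) _ (sp_ne θ)).hasFDerivAt
  have h3 : HasFDerivAt (fun x : Eu d => x j) (EuclideanSpace.proj j : Eu d →L[ℝ] ℝ) θ.1 :=
    (EuclideanSpace.proj j : Eu d →L[ℝ] ℝ).hasFDerivAt
  have h4 := (h2.congr_of_eventuallyEq h1.symm).unique h3
  have h5 := congrArg (fun l => l (ee i)) h4
  simp only [sp_norm, ext0_sphere, _root_.add_apply, _root_.smul_apply,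
    fderiv_nrm_ee, smul_eq_mul, one_mul, uu_apply] at h5
  rw [dD_apply, eq_sub_of_add_eq h5]
  split_ifs with hij
  · subst hij
    simp [uu_apply, mul_comm]
  · simp [uu_apply, mul_comm, Ne.symm hij, hij]

lemma fderiv_ext0_smul (F : smA d) (x : Eu d) {t : ℝ} (ht : 0 < t) :
    fderiv ℝ (ext0 F.1) x = t • fderiv ℝ (ext0 F.1) (t • x) := by
  rw [← fderiv_comp_smul]
  congr 1
  funext y
  exact (ext0_smul _ _ ht).symm

lemma fderiv_ext0_self (F : smA d) (x : Eu d) (hx : x ≠ 0) : fderiv ℝ (ext0 F.1) x x = 0 := by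
  have h1 : HasDerivAt (fun t : ℝ => t • x) x 1 := by
    simpa using (hasDerivAt_id (1:ℝ)).smul_const x
  have h2 : HasFDerivAt (ext0 F.1) (fderiv ℝ (ext0 F.1) x) ((1:ℝ) • x) := by
    simpa using (smA_diff F x hx).hasFDerivAt
  have h3 := h2.comp_hasDerivAt (1:ℝ) h1
  have h4 : (ext0 F.1 ∘ fun t : ℝ => t • x) =ᶠ[nhds 1] fun _ => ext0 F.1 x := by
    filter_upwards [lt_mem_nhds (zero_lt_one' ℝ)] with t ht
    exact ext0_smul _ _ ht
  exact h3.unique ((hasDerivAt_const (1:ℝ) _).congr_of_eventuallyEq h4)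

lemma ee_sum (l : Eu d →L[ℝ] ℝ) (x : Eu d) : ∑ i, x i * l (ee i) = l x := by
  conv_rhs => rw [← (EuclideanSpace.basisFun (Fin d) ℝ).sum_repr x]
  simp [map_sum]

lemma sum_uu_dD (F : smA d) : ∑ i, uu i * dD i F = 0 := by
  apply Subtype.ext
  funext θ
  rw [AddSubmonoidClass.coe_finsetSum, Finset.sum_apply]
  simp only [Subalgebra.coe_mul, Pi.mul_apply, uu_apply, dD_apply]
  rw [ee_sum, fderiv_ext0_self F _ (sp_ne θ)]; rfl

lemma ext0_dD (i : Fin d) (F : smA d) (x : Eu d) (hx : x ≠ 0) :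
    ext0 (dD i F).1 x = ‖x‖ * fderiv ℝ (ext0 F.1) x (ee i) := by
  have hp := norm_pos_iff.2 hx
  rw [ext0_of_eq _ x hx ⟨_, nrm_mem x hx⟩ rfl, dD_apply, fderiv_ext0_smul F x (inv_pos.2 hp)]
  simp only [_root_.smul_apply, smul_eq_mul]
  rw [← mul_assoc, mul_inv_cancel₀ hp.ne', one_mul]

/-- The Laplacian as a linear map. -/
def LL (d : ℕ) : smA d →ₗ[ℝ] smA d := ∑ i, dD i ∘ₗ dD i

lemma LL_apply (F : smA d) : LL d F = ∑ i, dD i (dD i F) := by simp [LL]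

lemma sphLap_eq (F : smA d) (θ : Sp d) : sphLap F.1 θ = (LL d F).1 θ := by
  rw [LL_apply, AddSubmonoidClass.coe_finsetSum, Finset.sum_apply]
  unfold sphLap eucLap
  have key : ∀ i, (dD i (dD i F)).1 θ = fderiv ℝ (fun y => fderiv ℝ (ext0 F.1) y (ee i)) θ.1 (ee i)
      + θ.1 i * fderiv ℝ (ext0 F.1) θ.1 (ee i) := by
    intro i
    rw [dD_apply]
    have h1 := ext0_eventually _ _ (ext0_dD i F) θ.1 (sp_ne θ)
    have h2 := (hasFDerivAt_nrm θ).mul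
      ((smA_fd F _ (sp_ne θ) (ee i)).differentiableAt (by simp)).hasFDerivAt
    rw [(h2.congr_of_eventuallyEq h1).fderiv]
    simp only [sp_norm, _root_.add_apply, _root_.smul_apply,
      fderiv_nrm_ee, smul_eq_mul, one_mul]
    ring
  simp only [key, Finset.sum_add_distrib]
  rw [ee_sum, fderiv_ext0_self F _ (sp_ne θ), add_zero]

lemma LL_uu_mul (j : Fin d) (q : smA d) :
    LL d (uu j * q) = uu j * LL d q + (2:ℝ) • dD j q - ((d:ℝ) - 1) • (uu j * q) := by
  have hsq : ∑ i : Fin d, uu i * uu i = (1 : smA d) := by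
    apply Subtype.ext
    funext θ
    rw [AddSubmonoidClass.coe_finsetSum, Finset.sum_apply]
    simp only [Subalgebra.coe_mul, Pi.mul_apply, uu_apply]
    have := EuclideanSpace.real_norm_sq_eq θ.1
    rw [sp_norm] at this
    simp only [← sq]
    rw [← this]; simp
  have h := sum_uu_dD q
  have hone : ∀ i : Fin d, dD i (1 : smA d) = 0 := by
    intro i
    have := dD_mul i 1 1
    rw [one_mul, one_mul, mul_one] at this
    exact left_eq_add.1 this
  have e : ∀ i, dD i (dD i (uu j * q)) = uu j * dD i (dD i q)
      + (2:ℝ) • ((if i = j then 1 else 0) * dD i q) - (2:ℝ) • (uu j * (uu i * dD i q))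
      - (if i = j then 1 else 0) * (uu i * q) - (uu j * q)
      + (2:ℝ) • ((uu i * uu i) * (uu j * q)) := by
    intro i
    have e1 : dD i (if i = j then (1 : smA d) else 0) = 0 := by split_ifs <;> simp [hone]
    rw [dD_mul, dD_uu, map_add, dD_mul, dD_mul, map_sub, e1, dD_mul, dD_uu, dD_uu, if_pos rfl]
    simp only [two_smul]
    ring
  rw [LL_apply, LL_apply]
  simp only [e, Finset.sum_add_distrib, Finset.sum_sub_distrib, ← Finset.smul_sum,
    ← Finset.mul_sum, ← Finset.sum_mul, h, hsq]
  simp [Finset.sum_ite_eq, ite_mul]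
  simp only [two_smul, sub_smul, one_smul, Nat.cast_smul_eq_nsmul, nsmul_eq_mul]
  ring

/-- Polynomials of degree at most `n` on the sphere. -/
def VV (d : ℕ) : ℕ → Submodule ℝ (smA d)
  | 0 => Submodule.span ℝ {1}
  | n + 1 => VV d n ⊔ ⨆ i, (VV d n).map (LinearMap.mulLeft ℝ (uu i))

lemma VV_mono : Monotone (VV d) := monotone_nat_of_le_succ fun _ => le_sup_left

lemma VV_uu {n : ℕ} (i : Fin d) {q : smA d} (hq : q ∈ VV d n) : uu i * q ∈ VV d (n+1) :=
  (le_sup_right : _ ≤ VV d (n+1))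
    (Submodule.mem_iSup_of_mem i (Submodule.mem_map_of_mem (f := LinearMap.mulLeft ℝ (uu i)) hq))

instance VV_fin (n : ℕ) : FiniteDimensional ℝ (VV d n) := by
  induction n with
  | zero =>
    change FiniteDimensional ℝ (Submodule.span ℝ {(1 : smA d)} : Submodule ℝ (smA d))
    infer_instance
  | succ n ih =>
    change FiniteDimensional ℝ
      (VV d n ⊔ ⨆ i, (VV d n).map (LinearMap.mulLeft ℝ (uu i)) : Submodule ℝ (smA d))
    infer_instance

lemma VV_ind {n : ℕ} (P : Submodule ℝ (smA d)) (h1 : VV d n ≤ P)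
    (h2 : ∀ i, ∀ q ∈ VV d n, uu i * q ∈ P) : VV d (n+1) ≤ P := by
  refine sup_le h1 (iSup_le fun i => ?_)
  rintro _ ⟨q, hq, rfl⟩
  exact h2 i q hq

lemma dD_one (i : Fin d) : dD i (1 : smA d) = 0 := by
  have := dD_mul i 1 1
  rw [one_mul, one_mul, mul_one] at this
  exact left_eq_add.1 this

lemma dD_V0 (i : Fin d) {q : smA d} (hq : q ∈ VV d 0) : dD i q = 0 := by
  obtain ⟨c, rfl⟩ := Submodule.mem_span_singleton.1 hq
  rw [map_smul, dD_one, smul_zero]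

lemma LL_V0 {q : smA d} (hq : q ∈ VV d 0) : LL d q = 0 := by
  simp [LL_apply, dD_V0 _ hq]

lemma dD_VV (i : Fin d) (n : ℕ) :
    ∀ q ∈ VV d n, dD i q + (n:ℝ) • (uu i * q) ∈ VV d n := by
  induction n with
  | zero =>
    intro q hq
    rw [dD_V0 i hq]; simp
  | succ n ih =>
    refine VV_ind ((VV d (n+1)).comap (dD i + ((n+1:ℕ):ℝ) • LinearMap.mulLeft ℝ (uu i))) ?_ ?_
    · intro q hq
      simp only [Submodule.mem_comap, LinearMap.add_apply, LinearMap.smul_apply,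
        LinearMap.mulLeft_apply]
      have := (VV d (n+1)).add_mem (VV_mono n.le_succ (ih q hq)) (VV_uu i hq)
      convert! this using 1
      push_cast
      rw [add_smul, one_smul, add_assoc]
    · intro j q hq
      simp only [Submodule.mem_comap, LinearMap.add_apply, LinearMap.smul_apply,
        LinearMap.mulLeft_apply]
      have h1 := VV_uu j (ih q hq)
      have h2 : (if i = j then (1 : smA d) else 0) * q ∈ VV d (n+1) := by
        split_ifs
        · rw [one_mul]; exact VV_mono n.le_succ hq
        · rw [zero_mul]; exact Submodule.zero_mem _
      convert! (VV d (n+1)).add_mem h1 h2 using 1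
      rw [dD_mul, dD_uu]
      push_cast
      rw [add_smul, one_smul, mul_add, mul_smul_comm, sub_mul,
        show uu j * (uu i * q) = uu i * (uu j * q) by ring,
        show uu i * uu j * q = uu i * (uu j * q) by ring]
      abel

lemma dD_mem (i : Fin d) {n : ℕ} {q : smA d} (hq : q ∈ VV d n) : dD i q ∈ VV d (n+1) := by
  have := (VV d (n+1)).sub_mem (VV_mono n.le_succ (dD_VV i n q hq))
    ((VV d (n+1)).smul_mem (n:ℝ) (VV_uu i hq))
  simpa using this

lemma LL_mem (n : ℕ) : ∀ q ∈ VV d n, LL d q ∈ VV d n := by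
  induction n with
  | zero =>
    intro q hq
    rw [LL_V0 hq]; exact Submodule.zero_mem _
  | succ n ih =>
    refine VV_ind ((VV d (n+1)).comap (LL d)) ?_ ?_
    · intro q hq
      exact VV_mono n.le_succ (ih q hq)
    · intro j q hq
      rw [Submodule.mem_comap, LL_uu_mul]
      exact Submodule.sub_mem _ (Submodule.add_mem _ (VV_uu j (ih q hq))
        (Submodule.smul_mem _ _ (dD_mem j hq))) (Submodule.smul_mem _ _ (VV_uu j hq))

/-- The eigenvalues. -/
def lamn (d n : ℕ) : ℝ := n * (n + d - 2)

lemma LL_VV (n : ℕ) : ∀ q ∈ VV d (n+1), LL d q + lamn d (n+1) • q ∈ VV d n := by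
  have step : ∀ n, (∀ j : Fin d, ∀ q ∈ VV d n, uu j * (LL d q + lamn d n • q) ∈ VV d n) →
      ∀ q ∈ VV d (n+1), LL d q + lamn d (n+1) • q ∈ VV d n := by
    intro n hn
    refine VV_ind ((VV d n).comap (LL d + lamn d (n+1) • LinearMap.id)) ?_ ?_
    · intro q hq
      exact Submodule.add_mem _ (LL_mem n q hq) (Submodule.smul_mem _ _ hq)
    · intro j q hq
      have := (VV d n).add_mem (hn j q hq) ((VV d n).smul_mem 2 (dD_VV j n q hq))
      change LL d (uu j * q) + lamn d (n+1) • (uu j * q) ∈ VV d n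
      convert! this using 1
      rw [LL_uu_mul, mul_add, mul_smul_comm]
      have : lamn d (n+1) = lamn d n + 2 * n + (d - 1) := by
        unfold lamn; push_cast; ring
      rw [this]
      module
  induction n with
  | zero =>
    apply step
    intro j q hq
    rw [LL_V0 hq]
    simp [lamn]
  | succ n ih =>
    apply step
    intro j q hq
    exact VV_uu j (ih q hq)

lemma smA_cont (F : smA d) : Continuous F.1 := by
  have : F.1 = fun θ : Sp d => ext0 F.1 θ.1 := by funext θ; rw [ext0_sphere]
  rw [this, continuous_iff_continuousAt]
  intro θ
  exact ContinuousAt.comp (smA_diff F _ (sp_ne θ)).continuousAt continuousAt_subtype_val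

/-- Smooth functions as continuous functions. -/
def toC (d : ℕ) : smA d →ₐ[ℝ] C(Sp d, ℝ) where
  toFun F := ⟨F.1, smA_cont F⟩
  map_one' := rfl
  map_mul' _ _ := rfl
  map_zero' := rfl
  map_add' _ _ := rfl
  commutes' _ := rfl

lemma adjoin_le : Subalgebra.toSubmodule (Algebra.adjoin ℝ (Set.range (uu (d := d))))
    ≤ ⨆ n, VV d n := by
  intro c hc
  have hdir : Directed (· ≤ ·) (VV d) := VV_mono.directed_le
  have : ∀ q ∈ ⨆ n, VV d n, c * q ∈ ⨆ n, VV d n := by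
    induction hc using Algebra.adjoin_induction with
    | mem x hx =>
      obtain ⟨i, rfl⟩ := hx
      intro q hq
      obtain ⟨n, hn⟩ := (Submodule.mem_iSup_of_directed _ hdir).1 hq
      exact Submodule.mem_iSup_of_mem (n+1) (VV_uu i hn)
    | algebraMap r =>
      intro q hq
      rw [← Algebra.smul_def]; exact Submodule.smul_mem _ _ hq
    | add x y _ _ hx hy =>
      intro q hq
      rw [add_mul]; exact Submodule.add_mem _ (hx q hq) (hy q hq)
    | mul x y _ _ hx hy =>
      intro q hq
      rw [mul_assoc]; exact hx _ (hy q hq)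
  simpa using this 1 (Submodule.mem_iSup_of_mem 0 (Submodule.mem_span_singleton_self 1))

instance : IsFiniteMeasure (sphMeasure d) := by unfold sphMeasure; infer_instance

/-- Embedding into `L²`. -/
def iot (d : ℕ) : smA d →ₗ[ℝ] Lp ℝ 2 (sphMeasure d) :=
  (ContinuousMap.toLp 2 (sphMeasure d) ℝ : C(Sp d, ℝ) →L[ℝ] _).toLinearMap ∘ₗ (toC d).toLinearMap

lemma iot_dense : ⊤ ≤ (⨆ n, (VV d n).map (iot d)).topologicalClosure := by
  have hsw := ContinuousMap.subalgebra_topologicalClosure_eq_top_of_separatesPoints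
    ((Algebra.adjoin ℝ (Set.range (uu (d := d)))).map (toC d)) (by
      intro x y hxy
      have : ∃ i, x.1 i ≠ y.1 i := by
        by_contra! h
        exact hxy (Subtype.ext (PiLp.ext h))
      obtain ⟨i, hi⟩ := this
      refine ⟨_, ⟨toC d (uu i), ?_, rfl⟩, hi⟩
      exact ⟨uu i, Algebra.subset_adjoin ⟨i, rfl⟩, rfl⟩)
  have hsw' : (Subalgebra.toSubmodule
      ((Algebra.adjoin ℝ (Set.range (uu (d := d)))).map (toC d))).topologicalClosure = ⊤ := by
    ext x
    exact SetLike.ext_iff.1 hsw x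
  have h2 := (ContinuousMap.toLp_denseRange ℝ (sphMeasure d) ℝ
    (p := 2) (by simp)).topologicalClosure_map_submodule hsw'
  rw [← h2]
  apply Submodule.topologicalClosure_mono
  rw [← Submodule.map_iSup]
  rintro _ ⟨_, ⟨a, ha, rfl⟩, rfl⟩
  exact ⟨a, adjoin_le ha, rfl⟩

lemma iot_inner (F G : smA d) : ⟪iot d F, iot d G⟫ = ∫ θ, F.1 θ * G.1 θ ∂(sphMeasure d) := by
  have := ContinuousMap.inner_toLp (𝕜 := ℝ) (sphMeasure d) (toC d F) (toC d G)
  refine Eq.trans this ?_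
  refine integral_congr_ae (Filter.Eventually.of_forall fun θ => ?_)
  simp only [conj_trivial]
  exact mul_comm _ _

lemma polar (G : Sp d → ℝ) (a : ℝ → ℝ) (h : Eu d → ℝ)
    (hh : ∀ x, x ≠ 0 → h x = ext0 G x * a ‖x‖) (hd : 2 ≤ d) :
    ∫ x, h x = (∫ θ, G θ ∂(sphMeasure d)) *
      ∫ r, a r.1 ∂(Measure.volumeIoiPow (Module.finrank ℝ (Eu d) - 1)) := by
  have : Nontrivial (Eu d) := by
    have : Nonempty (Fin d) := ⟨⟨0, by omega⟩⟩
    infer_instance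
  have h1 : ∫ x, h x = ∫ x : ({(0 : Eu d)}ᶜ : Set (Eu d)), h x.1 ∂(volume.comap Subtype.val) := by
    rw [integral_subtype_comap (measurableSet_singleton _).compl, restrict_compl_singleton]
  rw [h1, ← integral_prod_mul]
  unfold sphMeasure
  rw [← (volume : Measure (Eu d)).measurePreserving_homeomorphUnitSphereProd.integral_comp
    (Homeomorph.measurableEmbedding _)]
  refine integral_congr_ae (Filter.Eventually.of_forall fun x => ?_)
  simp only
  rw [hh x.1 x.2, ext0_of_eq G x.1 x.2 ((homeomorphUnitSphereProd (Eu d)) x).1 (by simp)]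
  simp

lemma integrable_cut (φ g : Eu d → ℝ) (hφ : Continuous φ) (hc : HasCompactSupport φ)
    (h0 : (0 : Eu d) ∉ tsupport φ) (hg : ∀ x, x ≠ 0 → ContinuousAt g x) :
    Integrable (fun x => g x * φ x) := by
  refine Continuous.integrable_of_hasCompactSupport ?_ hc.mul_left
  refine continuous_of_tsupport fun x hx => ?_
  have hx' : x ∈ tsupport φ := tsupport_mul_subset_right hx
  exact (hg x (fun h => h0 (h ▸ hx'))).mul hφ.continuousAt

/-- 1d cutoff -/
def chi : ContDiffBump (1:ℝ) := ⟨1/4, 1/2, by norm_num, by norm_num⟩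

/-- radial cutoff -/
def phi (x : Eu d) : ℝ := chi (‖x‖^2)

lemma phi_cd : ContDiff ℝ (⊤ : ℕ∞) (phi (d := d)) :=
  chi.contDiff.comp (contDiff_norm_sq ℝ)

lemma phi_tsupport : tsupport (phi (d := d)) ⊆ {x | 1/2 ≤ ‖x‖^2 ∧ ‖x‖^2 ≤ 3/2} := by
  refine closure_minimal ?_ ?_
  · intro x hx
    have : ‖x‖^2 ∈ Function.support chi := hx
    rw [chi.support_eq, Metric.mem_ball, Real.dist_eq, abs_lt] at this
    simp only [chi] at this
    exact ⟨by linarith, by linarith⟩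
  · have h1 : IsClosed {x : Eu d | 1/2 ≤ ‖x‖^2} :=
      isClosed_le continuous_const (continuous_norm.pow 2)
    have h2 : IsClosed {x : Eu d | ‖x‖^2 ≤ 3/2} :=
      isClosed_le (continuous_norm.pow 2) continuous_const
    exact h1.inter h2

lemma phi_zero : (0 : Eu d) ∉ tsupport (phi (d := d)) := by
  intro h
  have := (phi_tsupport h).1
  norm_num at this

lemma phi_comp : HasCompactSupport (phi (d := d)) := by
  refine (isCompact_closedBall (0 : Eu d) 2).of_isClosed_subset (isClosed_tsupport _) ?_
  intro x hx
  have := (phi_tsupport hx).2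
  rw [mem_closedBall_zero_iff]
  nlinarith [norm_nonneg x]

lemma phi_fderiv (x : Eu d) (i : Fin d) :
    fderiv ℝ phi x (ee i) = deriv chi (‖x‖^2) * (2 * x i) := by
  have h1 : HasDerivAt chi (deriv chi (‖x‖^2)) (‖x‖^2) :=
    ((chi.contDiff (n := 1)).differentiable (by simp) _).hasDerivAt
  have h2 := h1.comp_hasFDerivAt x (hasStrictFDerivAt_norm_sq x).hasFDerivAt
  have h3 : HasFDerivAt phi _ x := h2
  rw [h3.fderiv]
  simp [ee, EuclideanSpace.inner_single_right]

lemma ibp (hd : 2 ≤ d) : ∃ κ : ℝ, ∀ (F : smA d) (i : Fin d),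
    ∫ θ, (dD i F).1 θ ∂(sphMeasure d) = κ * ∫ θ, (uu i * F).1 θ ∂(sphMeasure d) := by
  set ν := Measure.volumeIoiPow (Module.finrank ℝ (Eu d) - 1) with hν
  set c := ∫ r, chi (r.1^2) * r.1⁻¹ ∂ν with hc
  set c' := ∫ r, deriv chi (r.1^2) * (2 * r.1) ∂ν with hc'
  have key : ∀ (F : smA d) (i : Fin d),
      (∫ θ, (dD i F).1 θ ∂(sphMeasure d)) * c
        = - ((∫ θ, (uu i * F).1 θ ∂(sphMeasure d)) * c') := by
    intro F i
    rw [hc, hc', ← polar (dD i F).1 (fun r => chi (r^2) * r⁻¹)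
      (fun x => fderiv ℝ (ext0 F.1) x (ee i) * phi x) _ hd,
      ← polar (uu i * F).1 (fun r => deriv chi (r^2) * (2 * r))
      (fun x => ext0 F.1 x * fderiv ℝ phi x (ee i)) _ hd]
    · rw [integral_mul_fderiv_eq_neg_fderiv_mul_of_integrable, neg_neg]
      · exact integrable_cut _ _ phi_cd.continuous phi_comp phi_zero
          (fun x hx => (smA_fd F x hx (ee i)).continuousAt)
      · refine integrable_cut (fun x => fderiv ℝ phi x (ee i)) _ ?_ ?_ ?_
          (fun x hx => (smA_cd F x hx).continuousAt)
        · exact (phi_cd.continuous_fderiv (by simp)).clm_apply continuous_const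
        · exact phi_comp.fderiv_apply ℝ (ee i)
        · exact fun h => phi_zero (tsupport_fderiv_apply_subset ℝ (ee i) h)
      · exact integrable_cut _ _ phi_cd.continuous phi_comp phi_zero
          (fun x hx => (smA_cd F x hx).continuousAt)
      · exact fun x hx => smA_diff F x (fun h => phi_zero (h ▸ hx))
      · exact fun x _ => phi_cd.differentiable (by simp) x
    · intro x hx
      have := norm_ne_zero_iff.2 hx
      rw [phi_fderiv, Subalgebra.coe_mul, ext0_mul, Pi.mul_apply, ext0_uu i x hx]
      field_simp
    · intro x hx
      have := norm_ne_zero_iff.2 hx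
      rw [ext0_dD i F x hx, phi]
      field_simp
  have hcpos : c ≠ 0 := by
    intro h0
    have h1 := polar (d := d) (fun _ => 1) (fun r => chi (r^2) * r⁻¹)
      (fun x => ‖x‖⁻¹ * phi x) (fun x hx => by
        rw [ext0_of_eq _ x hx ⟨_, nrm_mem x hx⟩ rfl, phi]; ring) hd
    rw [← hν, ← hc, h0, mul_zero] at h1
    have hcont : Continuous fun x : Eu d => ‖x‖⁻¹ * phi x := by
      refine continuous_of_tsupport fun x hx => ?_
      have hx' : x ∈ tsupport phi := tsupport_mul_subset_right hx
      have hx0 : x ≠ 0 := fun h => phi_zero (h ▸ hx')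
      exact (continuous_norm.continuousAt.inv₀ (norm_ne_zero_iff.2 hx0)).mul
        phi_cd.continuous.continuousAt
    have := Continuous.integral_pos_of_hasCompactSupport_nonneg_nonzero (μ := volume) hcont
      phi_comp.mul_left (fun x => mul_nonneg (inv_nonneg.2 (norm_nonneg _)) chi.nonneg)
      (x := ee ⟨0, by omega⟩) (by
        have : chi (1:ℝ) = 1 := chi.one_of_mem_closedBall (by simp [chi])
        simp [phi, ee, this])
    exact this.ne' h1
  refine ⟨-c' / c, fun F i => ?_⟩
  have := key F i
  field_simp
  linarith

lemma int_smA (F : smA d) : Integrable F.1 (sphMeasure d) :=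
  (smA_cont F).integrable_of_hasCompactSupport (HasCompactSupport.of_compactSpace _)

lemma green (hd : 2 ≤ d) (F G : smA d) :
    ∫ θ, (LL d F * G).1 θ ∂(sphMeasure d)
      = - ∫ θ, (∑ i, dD i F * dD i G).1 θ ∂(sphMeasure d) := by
  obtain ⟨κ, hκ⟩ := ibp hd
  have hadd : ∀ a b : smA d, ∫ θ, (a + b).1 θ ∂(sphMeasure d)
      = ∫ θ, a.1 θ ∂(sphMeasure d) + ∫ θ, b.1 θ ∂(sphMeasure d) :=
    fun a b => integral_add (int_smA a) (int_smA b)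
  let I : smA d →+ ℝ := ⟨⟨fun a => ∫ θ, a.1 θ ∂(sphMeasure d), by simp⟩, hadd⟩
  have hI : ∀ a i, I (dD i a) = κ * I (uu i * a) := hκ
  change I (LL d F * G) = - I (∑ i, dD i F * dD i G)
  have h1 : LL d F * G = ∑ i, dD i (dD i F * G) - ∑ i, dD i F * dD i G := by
    rw [LL_apply, Finset.sum_mul, ← Finset.sum_sub_distrib]
    refine Finset.sum_congr rfl fun i _ => ?_
    rw [dD_mul]; ring
  rw [h1, map_sub, map_sum]
  simp only [hI]
  rw [← Finset.mul_sum, ← map_sum]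
  have : ∑ i, uu i * (dD i F * G) = 0 := by
    simp only [← mul_assoc]
    rw [← Finset.sum_mul, sum_uu_dD, zero_mul]
  rw [this]; simp

lemma iot_sym (hd : 2 ≤ d) (a b : smA d) :
    ⟪iot d (LL d a), iot d b⟫ = ⟪iot d a, iot d (LL d b)⟫ := by
  rw [real_inner_comm _ (iot d a), iot_inner, iot_inner]
  have h1 := green hd a b
  have h2 := green hd b a
  have h3 : ∑ i, dD i a * dD i b = ∑ i, dD i b * dD i a :=
    Finset.sum_congr rfl fun i _ => mul_comm _ _
  rw [h3, ← h2] at h1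
  exact h1

lemma lam_cond (hd : 2 ≤ d) (n : ℕ) :
    0 ≤ (lamn d n - 2 * d) * (lamn d n - 3 * (d + 1)) := by
  have hd' : (2:ℝ) ≤ d := by exact_mod_cast hd
  unfold lamn
  rcases Nat.lt_or_ge n 3 with h | h
  · have h' : (n:ℝ) ≤ 2 := by exact_mod_cast (by omega : n ≤ 2)
    have h0 : (0:ℝ) ≤ n := n.cast_nonneg
    apply mul_nonneg_of_nonpos_of_nonpos <;> nlinarith
  · have h' : (3:ℝ) ≤ n := by exact_mod_cast h
    apply mul_nonneg <;> nlinarith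

/-- If `d ≥ 2` and `F` is a smooth function on `𝕊^{d-1}` whose zeroth and
first spherical harmonic components vanish (i.e. `∫ F = 0` and `∫ F(θ) θ dθ = 0`), then
`0 ≤ ‖[Δ + (d−1)]F‖² − (3d+5)⟨F, [−Δ − (d−1)]F⟩ + 2(d+1)(d+2)‖F‖²`. -/
theorem sphere_poincare_lambda23 (d : ℕ) (hd : 2 ≤ d)
    (F : Metric.sphere (0 : EuclideanSpace ℝ (Fin d)) 1 → ℝ)
    (hF : SphSmooth F)
    (hmean : (∫ θ, F θ ∂(sphMeasure d)) = 0)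
    (hfirst : (∫ θ, F θ • (θ : EuclideanSpace ℝ (Fin d)) ∂(sphMeasure d)) = 0) :
    0 ≤ (∫ θ, (sphLap F θ + ((d : ℝ) - 1) * F θ) ^ 2 ∂(sphMeasure d))
        - (3 * (d : ℝ) + 5) *
          (∫ θ, F θ * (-sphLap F θ - ((d : ℝ) - 1) * F θ) ∂(sphMeasure d))
        + 2 * ((d : ℝ) + 1) * ((d : ℝ) + 2) * (∫ θ, F θ * F θ ∂(sphMeasure d)) := by
  set f : smA d := ⟨F, hF⟩ with hf
  have main := abstract_spectral (iot d) (LL d) (iot_sym hd) (VV d) VV_mono (lamn d)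
    (fun a ha => by rw [LL_V0 ha]; simp [lamn]) LL_VV iot_dense (2 * d) (3 * (d + 1))
    (lam_cond hd) f
  have hL : ∀ θ, sphLap F θ = (LL d f).1 θ := fun θ => sphLap_eq f θ
  have e1 : ∫ θ, (sphLap F θ + ((d : ℝ) - 1) * F θ) ^ 2 ∂(sphMeasure d)
      = ⟪iot d (LL d f + ((d:ℝ) - 1) • f), iot d (LL d f + ((d:ℝ) - 1) • f)⟫ := by
    rw [iot_inner]
    refine integral_congr_ae (Filter.Eventually.of_forall fun θ => ?_)
    simp only [hL, hf, Subalgebra.coe_add, Subalgebra.coe_smul, Pi.add_apply, Pi.smul_apply,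
      smul_eq_mul]
    ring
  have e2 : ∫ θ, F θ * (-sphLap F θ - ((d : ℝ) - 1) * F θ) ∂(sphMeasure d)
      = ⟪iot d f, iot d (-LL d f - ((d:ℝ) - 1) • f)⟫ := by
    rw [iot_inner]
    refine integral_congr_ae (Filter.Eventually.of_forall fun θ => ?_)
    simp only [hL]
    rfl
  have e3 : ∫ θ, F θ * F θ ∂(sphMeasure d) = ⟪iot d f, iot d f⟫ := by
    rw [iot_inner]
  rw [e1, e2, e3]
  simp only [map_add, map_sub, map_neg, map_smul, inner_add_left, inner_add_right, inner_sub_right,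
    inner_neg_right, inner_smul_left, inner_smul_right, conj_trivial] at main ⊢
  rw [real_inner_comm (iot d f) (iot d (LL d f))] at main ⊢
  nlinarith
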